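/- (Composition of reward transformations.) Let S be a pGCL program and let f, g : ℝ≥0∞ → ℝ≥0∞ be monotone. Assume the auxiliary transformations T'_f and T'_{g∘f} both use the same fresh ghost variable τ, while T'_g uses a different fresh ghost variable τ'. Then for every expectation X, wp[τ' := f(τ); T'_g(T'_f(S))](X) = wp[T'_{g∘f}(S); τ' := f(τ)](X); equivalently, wp[T'_g(T'_f(S))](X)[τ' ↦ f(τ)] = wp[T'_{g∘f}(S)](X[τ' ↦ f(τ)]). -/

import Mathlib

open ENNReal

/-- Program states: maps from variables to extended non-negative reals. -/
abbrev PState (V : Type) := V → ℝ≥0∞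

/-- Expectations: maps from states to extended non-negative reals. -/
abbrev Expct (V : Type) := PState V → ℝ≥0∞

/-- Syntax of pGCL programs. -/
inductive pGCL (V : Type) : Type 1
  | skip : pGCL V
  | assign : V → Expct V → pGCL V
  | reward : Expct V → pGCL V
  | seq : pGCL V → pGCL V → pGCL V
  | prob : (p : ℝ≥0∞) → p ≤ 1 → pGCL V → pGCL V → pGCL V
  | ifte : (PState V → Bool) → pGCL V → pGCL V → pGCL V
  | loop : (PState V → Bool) → pGCL V → pGCL V

variable {V : Type} [DecidableEq V]

/-- The weakest pre-expectation transformer, bundled as an order hom. -/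
noncomputable def wpHom : pGCL V → (Expct V →o Expct V)
  | .skip => OrderHom.id
  | .assign x e => ⟨fun X σ => X (Function.update σ x (e σ)), fun _ _ h σ => h _⟩
  | .reward e => ⟨fun X σ => e σ + X σ, fun _ _ h σ => add_le_add le_rfl (h σ)⟩
  | .seq S₁ S₂ => (wpHom S₁).comp (wpHom S₂)
  | .prob p _ S₁ S₂ =>
      ⟨fun X σ => p * wpHom S₁ X σ + (1 - p) * wpHom S₂ X σ, by
        intro X Y h σ
        exact add_le_add (mul_le_mul' le_rfl ((wpHom S₁).monotone h σ))
          (mul_le_mul' le_rfl ((wpHom S₂).monotone h σ))⟩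
  | .ifte b S₁ S₂ =>
      ⟨fun X σ => if b σ then wpHom S₁ X σ else wpHom S₂ X σ, by
        intro X Y h σ
        dsimp only
        split
        · exact (wpHom S₁).monotone h σ
        · exact (wpHom S₂).monotone h σ⟩
  | .loop b S =>
      ⟨fun X => OrderHom.lfp
        ⟨fun Y σ => if b σ then wpHom S Y σ else X σ, by
          intro Y₁ Y₂ h σ
          dsimp only
          split
          · exact (wpHom S).monotone h σ
          · exact le_rfl⟩, by
        intro X₁ X₂ h
        apply OrderHom.lfp_le
        have := OrderHom.map_lfp
          (⟨fun Y σ => if b σ then wpHom S Y σ else X₂ σ, by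
            intro Y₁ Y₂ h σ
            dsimp only
            split
            · exact (wpHom S).monotone h σ
            · exact le_rfl⟩ : Expct V →o Expct V)
        refine le_trans (fun σ => ?_) (le_of_eq this)
        change (if b σ then _ else X₁ σ) ≤ (if b σ then _ else X₂ σ)
        split_ifs
        · exact le_rfl
        · exact h σ⟩

/-- The weakest pre-expectation `wp[S](X)`. -/
noncomputable def wp (S : pGCL V) (X : Expct V) : Expct V := wpHom S X

/-- An expression does not depend on variable `τ`. -/
def UnusedE (τ : V) (e : Expct V) : Prop := ∀ σ v, e (Function.update σ τ v) = e σ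

/-- A Boolean guard does not depend on variable `τ`. -/
def UnusedB (τ : V) (b : PState V → Bool) : Prop := ∀ σ v, b (Function.update σ τ v) = b σ

/-- Variable `τ` does not occur in the program `S`. -/
def NotOccurs (τ : V) : pGCL V → Prop
  | .skip => True
  | .assign x e => x ≠ τ ∧ UnusedE τ e
  | .reward e => UnusedE τ e
  | .seq S₁ S₂ => NotOccurs τ S₁ ∧ NotOccurs τ S₂
  | .prob _ _ S₁ S₂ => NotOccurs τ S₁ ∧ NotOccurs τ S₂
  | .ifte b S₁ S₂ => UnusedB τ b ∧ NotOccurs τ S₁ ∧ NotOccurs τ S₂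
  | .loop b S => UnusedB τ b ∧ NotOccurs τ S

/-- Auxiliary reward transformation `T'_f` with ghost variable `τ`:
replaces `reward(e)` by `reward(f(τ+e) − f(τ)); τ := τ + e`. -/
noncomputable def Taux (τ : V) (f : ℝ≥0∞ → ℝ≥0∞) : pGCL V → pGCL V
  | .reward e =>
      .seq (.reward fun σ => f (σ τ + e σ) - f (σ τ)) (.assign τ (fun σ => σ τ + e σ))
  | .seq S₁ S₂ => .seq (Taux τ f S₁) (Taux τ f S₂)
  | .prob p hp S₁ S₂ => .prob p hp (Taux τ f S₁) (Taux τ f S₂)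
  | .ifte b S₁ S₂ => .ifte b (Taux τ f S₁) (Taux τ f S₂)
  | .loop b S => .loop b (Taux τ f S)
  | .skip => .skip
  | .assign x e => .assign x e

/-- Full reward transformation `T_f(S) = τ := 0; reward(f(0)); T'_f(S)`. -/
noncomputable def Tfull (τ : V) (f : ℝ≥0∞ → ℝ≥0∞) (S : pGCL V) : pGCL V :=
  .seq (.assign τ (fun _ => 0)) (.seq (.reward fun _ => f 0) (Taux τ f S))

/-- Substitution fusion for least fixed points. -/
theorem lfp_precomp_fusion {A : Type} (h : A → A) (Φ Ψ : (A → ℝ≥0∞) →o (A → ℝ≥0∞))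
    (H : ∀ Y, (fun s => Φ Y (h s)) = Ψ (fun s => Y (h s))) :
    (fun s => OrderHom.lfp Φ (h s)) = OrderHom.lfp Ψ := by
  apply le_antisymm
  · have key : OrderHom.lfp Φ ≤ fun t => ⨅ s : {s // h s = t}, OrderHom.lfp Ψ s.1 := by
      apply OrderHom.lfp_le
      intro t
      refine le_iInf ?_
      rintro ⟨s, rfl⟩
      have h1 := congrFun (H (fun t => ⨅ s : {s // h s = t}, OrderHom.lfp Ψ s.1)) s
      refine h1.le.trans ?_
      have h2 : (fun s' => ⨅ u : {u // h u = h s'}, OrderHom.lfp Ψ u.1) ≤ OrderHom.lfp Ψ :=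
        fun s' => iInf_le (fun u : {u // h u = h s'} => OrderHom.lfp Ψ u.1) ⟨s', rfl⟩
      refine (Ψ.monotone h2 s).trans ?_
      rw [OrderHom.map_lfp]
    intro s
    exact (key (h s)).trans
      (iInf_le (fun u : {u // h u = h s} => OrderHom.lfp Ψ u.1) ⟨s, rfl⟩)
  · apply OrderHom.lfp_le
    rw [← H, OrderHom.map_lfp]

theorem wpHom_Taux_comp (f g : ℝ≥0∞ → ℝ≥0∞)
    (hf : Monotone f) (τ τ' : V) (hne : τ ≠ τ') (S : pGCL V)
    (hτ : NotOccurs τ S) (hτ' : NotOccurs τ' S) : ∀ X : Expct V,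
    (fun σ => wpHom (Taux τ' g (Taux τ f S)) X (Function.update σ τ' (f (σ τ))))
      = wpHom (Taux τ (g ∘ f) S) (fun σ => X (Function.update σ τ' (f (σ τ)))) := by
  induction S with
  | skip => intro X; rfl
  | assign x e =>
    intro X
    obtain ⟨h1, _⟩ := hτ
    obtain ⟨h2, h3⟩ := hτ'
    funext σ
    change X _ = X _
    rw [h3, Function.update_of_ne h1.symm, Function.update_comm h2]
  | reward e =>
    intro X
    funext σ
    have he : ∀ v, e (Function.update σ τ' v) = e σ := hτ' σ
    have hm : f (σ τ) + (f (σ τ + e σ) - f (σ τ)) = f (σ τ + e σ) :=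
      add_tsub_cancel_of_le (hf le_self_add)
    let s₁ : PState V := Function.update σ τ' (f (σ τ))
    let s₂ : PState V := Function.update s₁ τ' (s₁ τ' + (f (s₁ τ + e s₁) - f (s₁ τ)))
    let s₃ : PState V := Function.update σ τ (σ τ + e σ)
    change g (s₁ τ' + (f (s₁ τ + e s₁) - f (s₁ τ))) - g (s₁ τ')
        + X (Function.update s₂ τ (s₂ τ + e s₂))
      = g (f (σ τ + e σ)) - g (f (σ τ)) + X (Function.update s₃ τ' (f (s₃ τ)))
    simp [s₁, s₂, s₃, he, hne, hm, Function.update_comm hne]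
  | seq S₁ S₂ ih1 ih2 =>
    intro X
    have a := ih1 hτ.1 hτ'.1 (wpHom (Taux τ' g (Taux τ f S₂)) X)
    rw [ih2 hτ.2 hτ'.2] at a
    exact a
  | prob p hp S₁ S₂ ih1 ih2 =>
    intro X
    funext σ
    have a := congrFun (ih1 hτ.1 hτ'.1 X) σ
    have b := congrFun (ih2 hτ.2 hτ'.2 X) σ
    change p * _ + (1 - p) * _ = p * _ + (1 - p) * _
    exact congrArg₂ (fun u v => p * u + (1 - p) * v) a b
  | ifte b S₁ S₂ ih1 ih2 =>
    intro X
    funext σ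
    have a := congrFun (ih1 hτ.2.1 hτ'.2.1 X) σ
    have c := congrFun (ih2 hτ.2.2 hτ'.2.2 X) σ
    have hb := hτ'.1 σ (f (σ τ))
    change (if b (Function.update σ τ' (f (σ τ))) = true then _ else _)
      = (if b σ = true then _ else _)
    rw [hb]
    split
    · exact a
    · exact c
  | loop b S ih =>
    intro X
    refine lfp_precomp_fusion (fun σ : PState V => Function.update σ τ' (f (σ τ))) _ _ ?_
    intro Y
    funext σ
    have a := congrFun (ih hτ.2 hτ'.2 Y) σ
    have hb := hτ'.1 σ (f (σ τ))
    change (if b (Function.update σ τ' (f (σ τ))) = true then _ else _)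
      = (if b σ = true then _ else _)
    rw [hb]
    split
    · exact a
    · rfl

/-- Composition of reward transformations:
`wp[τ' := f(τ); T'_g(T'_f(S))](X) = wp[T'_{g∘f}(S); τ' := f(τ)](X)`,
where `T'_f` and `T'_{g∘f}` use the ghost variable `τ` and `T'_g` uses `τ'`. -/
theorem wp_Taux_comp (S : pGCL V) (f g : ℝ≥0∞ → ℝ≥0∞)
    (hf : Monotone f) (hg : Monotone g) (τ τ' : V) (hne : τ ≠ τ')
    (hτ : NotOccurs τ S) (hτ' : NotOccurs τ' S) (X : Expct V) :
    wp (.seq (.assign τ' (fun σ => f (σ τ))) (Taux τ' g (Taux τ f S))) X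
      = wp (.seq (Taux τ (g ∘ f) S) (.assign τ' (fun σ => f (σ τ)))) X := by
  exact wpHom_Taux_comp f g hf τ τ' hne S hτ hτ' X
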